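/- Let m be a positive integer and let s : Fin m → ZMod 2. Work in the Hilbert space EuclideanSpace ℂ ((Fin m → ZMod 2) × (Fin m → ZMod 2)) with basis vectors e_(z,z'), and let W be the linear map defined on basis vectors by W(e_(z,z')) = 2^(−m) · Σ_{u,v : Fin m → ZMod 2} (−1)^(z·u + z'·v) · e_(u,v) (the Hadamard transform applied to each of the 2m qubits). Then W(2^(−m/2) · Σ_{z : Fin m → ZMod 2} (−1)^(z·s) · e_(z,z)) = 2^(−m/2) · Σ_{u : Fin m → ZMod 2} e_(u, s+u). -/

import Mathlib

/-!
Applying `W` to the sum, the coefficient of `e (u, v)` is `2⁻ᵐ ∑ z, (-1) ^ (z · (s + u + v))`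
by bilinearity of `ip` and multiplicativity of `b ↦ (-1) ^ b` on `ZMod 2` (`neg_one_pow_val_add`).
Orthogonality of characters (`sum_neg_one_pow_ip`) makes this `1` if `s + u + v = 0` and `0`
otherwise; in characteristic two the condition says `v = s + u`, so only the terms
`e (u, s + u)` survive.
-/

open scoped BigOperators

/-- Inner product of two bit strings, in `ZMod 2`. -/
def ip {m : ℕ} (u v : Fin m → ZMod 2) : ZMod 2 := ∑ t, u t * v t

/-- Standard basis vector of `EuclideanSpace ℂ ι` supported at `p`. -/
noncomputable def e {ι : Type*} [DecidableEq ι] [Fintype ι] (p : ι) : EuclideanSpace ℂ ι :=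
  EuclideanSpace.single p 1

theorem neg_one_pow_val_add (a b : ZMod 2) :
    (-1 : ℂ) ^ (a + b).val = (-1) ^ a.val * (-1) ^ b.val := by
  rw [← pow_add, ZMod.val_add, neg_one_pow_eq_pow_mod_two (n := a.val + b.val)]

theorem neg_one_pow_val_sum {ι : Type*} (S : Finset ι) (f : ι → ZMod 2) :
    (-1 : ℂ) ^ (∑ t ∈ S, f t).val = ∏ t ∈ S, (-1) ^ (f t).val := by
  classical
  induction S using Finset.induction_on with
  | empty => simp
  | insert a S ha ih => rw [Finset.sum_insert ha, Finset.prod_insert ha, neg_one_pow_val_add, ih]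

theorem sum_neg_one_pow_mul (b : ZMod 2) :
    ∑ a : ZMod 2, (-1 : ℂ) ^ (a * b).val = if b = 0 then 2 else 0 := by
  have h : ∀ f : ZMod 2 → ℂ, ∑ a, f a = f 0 + f 1 := fun f => Fin.sum_univ_two f
  rw [h, zero_mul, one_mul]
  have hb : b = 0 ∨ b = 1 := by revert b; decide
  rcases hb with rfl | rfl
  · norm_num
  · simp [ZMod.val_one]

/-- Orthogonality of the characters of `(ZMod 2)ᵐ`: the sum factors over the coordinates. -/
theorem sum_neg_one_pow_ip {m : ℕ} (w : Fin m → ZMod 2) :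
    ∑ z : Fin m → ZMod 2, (-1 : ℂ) ^ (ip z w).val = if w = 0 then 2 ^ m else 0 := by
  simp only [ip, neg_one_pow_val_sum]
  rw [← Fintype.prod_sum (fun (t : Fin m) (a : ZMod 2) => (-1 : ℂ) ^ (a * w t).val)]
  simp only [sum_neg_one_pow_mul]
  split_ifs with h
  · simp [h]
  · obtain ⟨t, ht⟩ := Function.ne_iff.mp h
    exact Finset.prod_eq_zero (Finset.mem_univ t) (if_neg ht)

theorem ip_add_right {m : ℕ} (z u v : Fin m → ZMod 2) : ip z (u + v) = ip z u + ip z v := by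
  simp [ip, mul_add, Finset.sum_add_distrib]

theorem stmt7 (m : ℕ) (hm : 0 < m) (s : Fin m → ZMod 2)
    (W : EuclideanSpace ℂ ((Fin m → ZMod 2) × (Fin m → ZMod 2)) →ₗ[ℂ]
      EuclideanSpace ℂ ((Fin m → ZMod 2) × (Fin m → ZMod 2)))
    (hW : ∀ z z' : Fin m → ZMod 2,
      W (e (z, z')) = ((2 : ℂ) ^ m)⁻¹ •
        ∑ u : Fin m → ZMod 2, ∑ v : Fin m → ZMod 2,
          (-1 : ℂ) ^ ((ip z u + ip z' v).val) • e (u, v)) :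
    W (((Real.sqrt (2 ^ m) : ℂ))⁻¹ •
        ∑ z : Fin m → ZMod 2, (-1 : ℂ) ^ ((ip z s).val) • e (z, z)) =
      ((Real.sqrt (2 ^ m) : ℂ))⁻¹ • ∑ u : Fin m → ZMod 2, e (u, s + u) := by
  rw [map_smul, map_sum]
  congr 1
  simp only [map_smul, hW, Finset.smul_sum, smul_smul]
  rw [Finset.sum_comm]
  refine Finset.sum_congr rfl fun u _ => ?_
  rw [Finset.sum_comm]
  have key (v : Fin m → ZMod 2) :
      ∑ z : Fin m → ZMod 2, ((-1 : ℂ) ^ (ip z s).val *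
        (((2 : ℂ) ^ m)⁻¹ * (-1 : ℂ) ^ (ip z u + ip z v).val)) • e (u, v) =
      if v = s + u then e (u, v) else 0 := by
    have hv : s + u + v = 0 ↔ v = s + u := by
      have hneg : -v = v := funext fun t => ZModModule.neg_eq_self (v t)
      rw [add_eq_zero_iff_eq_neg, hneg, eq_comm]
    rw [← Finset.sum_smul]
    have hsum : ∑ z : Fin m → ZMod 2, ((-1 : ℂ) ^ (ip z s).val *
        (((2 : ℂ) ^ m)⁻¹ * (-1 : ℂ) ^ (ip z u + ip z v).val)) =
        ((2 : ℂ) ^ m)⁻¹ * ∑ z : Fin m → ZMod 2, (-1 : ℂ) ^ (ip z (s + u + v)).val := by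
      rw [Finset.mul_sum]
      refine Finset.sum_congr rfl fun z _ => ?_
      simp only [ip_add_right, neg_one_pow_val_add]
      ring
    rw [hsum, sum_neg_one_pow_ip]
    simp only [hv]
    split_ifs <;> simp
  simp only [key, Finset.sum_ite_eq', Finset.mem_univ, if_true]
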